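/- The function C(z) = Σ_{n≥0} c_n z^n, holomorphic on the open unit disk, is transcendental over ℂ(X); in particular C is not a rational function. -/

import Mathlib

theorem iptm_hs {u v : ℕ → ℂ} {a : ℂ} (h : HasSum u a) (e : ∀ m, v m = u m) : HasSum v a := by
  rw [funext e]; exact h

open Filter Topology in
theorem iptm_step (D : ℂ → ℂ) (hD : ∀ z : ℂ, ‖z‖ < 1 → D z = z + z ^ 3 * (1 + z ^ 2) * D (z ^ 4))
    (ζ : ℂ) (hζ : ‖ζ‖ = 1) (h2 : 1 + ζ ^ 2 ≠ 0)
    (h : Tendsto (fun r : ℝ => ‖D ((r : ℂ) * ζ ^ 4)‖) (𝓝[<] 1) atTop) :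
    Tendsto (fun r : ℝ => ‖D ((r : ℂ) * ζ)‖) (𝓝[<] 1) atTop := by
  have hpow : Tendsto (fun r : ℝ => r ^ 4) (𝓝[<] 1) (𝓝[<] 1) := by
    apply tendsto_nhdsWithin_of_tendsto_nhds_of_eventually_within
    · have : Tendsto (fun r : ℝ => r ^ 4) (𝓝 1) (𝓝 (1 ^ 4)) := (continuous_pow 4).tendsto 1
      rw [one_pow] at this
      exact this.mono_left nhdsWithin_le_nhds
    · have h0 : ∀ᶠ r : ℝ in 𝓝[<] 1, 0 < r :=
        (eventually_gt_nhds (by norm_num : (0:ℝ) < 1)).filter_mono nhdsWithin_le_nhds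
      filter_upwards [h0, self_mem_nhdsWithin] with r hr hr1
      exact pow_lt_one₀ hr.le hr1 (by norm_num)
  have h4 := h.comp hpow
  have hc : Tendsto (fun r : ℝ => ‖((r : ℂ) * ζ) ^ 3 * (1 + ((r : ℂ) * ζ) ^ 2)‖) (𝓝[<] 1)
      (𝓝 ‖ζ ^ 3 * (1 + ζ ^ 2)‖) := by
    have hcont : Continuous (fun r : ℝ => ‖((r : ℂ) * ζ) ^ 3 * (1 + ((r : ℂ) * ζ) ^ 2)‖) := by
      fun_prop
    have := hcont.tendsto 1
    simp only [Complex.ofReal_one, one_mul] at this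
    exact this.mono_left nhdsWithin_le_nhds
  have hpos : 0 < ‖ζ ^ 3 * (1 + ζ ^ 2)‖ := by
    rw [norm_pos_iff]
    refine mul_ne_zero (pow_ne_zero _ ?_) h2
    rintro rfl
    simp at hζ
  have hprod := (hc.pos_mul_atTop hpos h4)
  have hsub := tendsto_atTop_add_const_right _ (-1 : ℝ) hprod
  refine tendsto_atTop_mono' _ ?_ hsub
  have h0 : ∀ᶠ r : ℝ in 𝓝[<] 1, 0 < r :=
    (eventually_gt_nhds (by norm_num : (0:ℝ) < 1)).filter_mono nhdsWithin_le_nhds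
  filter_upwards [h0, self_mem_nhdsWithin] with r hr hr1
  have hr1 : r < 1 := hr1
  have hz : ‖(r : ℂ) * ζ‖ < 1 := by
    rw [norm_mul, hζ, mul_one, Complex.norm_real, Real.norm_of_nonneg hr.le]
    exact hr1
  have e := hD _ hz
  have e2 : ((r ^ 4 : ℝ) : ℂ) * ζ ^ 4 = ((r : ℂ) * ζ) ^ 4 := by push_cast; ring
  simp only [Function.comp]
  rw [e2, ← norm_mul]
  have e3 : ((r : ℂ) * ζ) ^ 3 * (1 + ((r : ℂ) * ζ) ^ 2) * D (((r : ℂ) * ζ) ^ 4)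
      = D ((r : ℂ) * ζ) - (r : ℂ) * ζ := by
    rw [e]; ring
  rw [e3]
  have := norm_sub_le (D ((r : ℂ) * ζ)) ((r : ℂ) * ζ)
  linarith

open Filter Topology in
theorem iptm_prim (D : ℂ → ℂ) (hD : ∀ z : ℂ, ‖z‖ < 1 → D z = z + z ^ 3 * (1 + z ^ 2) * D (z ^ 4))
    (h : Tendsto (fun r : ℝ => ‖D (r : ℂ)‖) (𝓝[<] 1) atTop) (k : ℕ) :
    ∀ ζ : ℂ, IsPrimitiveRoot ζ (2 * 4 ^ k) →
    Tendsto (fun r : ℝ => ‖D ((r : ℂ) * ζ)‖) (𝓝[<] 1) atTop := by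
  induction k with
  | zero =>
    intro ζ hζ
    have h2 : ζ ^ 2 = 1 := by simpa using hζ.pow_eq_one
    have h4 : ζ ^ 4 = 1 := by
      have : ζ ^ 4 = (ζ ^ 2) ^ 2 := by ring
      rw [this, h2, one_pow]
    apply iptm_step D hD ζ (hζ.norm'_eq_one (by norm_num))
    · rw [h2]; norm_num
    · simpa [h4] using h
  | succ k ih =>
    intro ζ hζ
    apply iptm_step D hD ζ (hζ.norm'_eq_one (by positivity))
    · intro h0
      have h4 : ζ ^ 4 = 1 := by
        have : ζ ^ 4 = (ζ ^ 2) ^ 2 := by ring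
        rw [this, show ζ ^ 2 = -1 by linear_combination h0]; norm_num
      have hd := hζ.dvd_of_pow_eq_one 4 h4
      have := Nat.le_of_dvd (by norm_num) hd
      have h1 : 1 ≤ 4 ^ k := Nat.one_le_pow _ _ (by norm_num)
      rw [pow_succ] at this
      omega
    · apply ih
      exact hζ.pow (by positivity) (by rw [pow_succ]; ring)

open Filter Topology in
theorem iptm_lead (f : ℂ → ℂ) (P : Polynomial (Polynomial ℂ)) 
    (hP : ∀ z : ℂ, ‖z‖ < 1 → Polynomial.eval (f z) (P.map (Polynomial.evalRingHom z)) = 0)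
    (ζ : ℂ) (hζ : ‖ζ‖ = 1)
    (h : Tendsto (fun r : ℝ => ‖f ((r : ℂ) * ζ)‖) (𝓝[<] 1) atTop) :
    P.leadingCoeff.eval ζ = 0 := by
  have hpe : ∀ p : Polynomial ℂ, Tendsto (fun r : ℝ => p.eval ((r : ℂ) * ζ)) (𝓝[<] 1)
      (𝓝 (p.eval ζ)) := by
    intro p
    have hcont : Continuous (fun r : ℝ => p.eval ((r : ℂ) * ζ)) :=
      p.continuous.comp (by fun_prop)
    have := hcont.tendsto 1
    simp only [Complex.ofReal_one, one_mul] at this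
    exact this.mono_left nhdsWithin_le_nhds
  have hinv : Tendsto (fun r : ℝ => (f ((r : ℂ) * ζ))⁻¹) (𝓝[<] 1) (𝓝 0) := by
    rw [tendsto_zero_iff_norm_tendsto_zero]
    simp only [norm_inv]
    exact h.inv_tendsto_atTop
  have hsum : Tendsto (fun r : ℝ => -∑ i ∈ Finset.range P.natDegree,
      (P.coeff i).eval ((r : ℂ) * ζ) * ((f ((r : ℂ) * ζ))⁻¹) ^ (P.natDegree - i)) (𝓝[<] 1)
      (𝓝 (-∑ i ∈ Finset.range P.natDegree, (P.coeff i).eval ζ * 0 ^ (P.natDegree - i))) :=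
    (tendsto_finsetSum _ fun i _ => (hpe _).mul (hinv.pow _)).neg
  have hz : (-∑ i ∈ Finset.range P.natDegree, (P.coeff i).eval ζ * 0 ^ (P.natDegree - i)) = 0 := by
    rw [neg_eq_zero]
    apply Finset.sum_eq_zero
    intro i hi
    rw [Finset.mem_range] at hi
    rw [zero_pow (by omega), mul_zero]
  rw [hz] at hsum
  refine tendsto_nhds_unique (hpe _) (hsum.congr' ?_)
  have h0 : ∀ᶠ r : ℝ in 𝓝[<] 1, 0 < r :=
    (eventually_gt_nhds (by norm_num : (0:ℝ) < 1)).filter_mono nhdsWithin_le_nhds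
  filter_upwards [h0, self_mem_nhdsWithin, h.eventually_gt_atTop 0] with r hr hr1 hfr
  have hr1 : r < 1 := hr1
  have hz : ‖(r : ℂ) * ζ‖ < 1 := by
    rw [norm_mul, hζ, mul_one, Complex.norm_real, Real.norm_of_nonneg hr.le]
    exact hr1
  have e := hP _ hz
  generalize (r : ℂ) * ζ = z at *
  rw [Polynomial.eval_map, Polynomial.eval₂_eq_sum_range, Finset.sum_range_succ] at e
  have hf0 : f z ≠ 0 := norm_pos_iff.mp hfr
  simp only [Polynomial.coe_evalRingHom] at e
  have hfd : f z ^ P.natDegree ≠ 0 := pow_ne_zero _ hf0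
  apply mul_right_cancel₀ hfd
  rw [neg_mul, Finset.sum_mul]
  have e1 : ∑ i ∈ Finset.range P.natDegree,
      (P.coeff i).eval z * ((f z)⁻¹) ^ (P.natDegree - i) * f z ^ P.natDegree
      = ∑ i ∈ Finset.range P.natDegree, (P.coeff i).eval z * f z ^ i := by
    apply Finset.sum_congr rfl
    intro i hi
    rw [Finset.mem_range] at hi
    obtain ⟨j, hj⟩ := Nat.exists_eq_add_of_lt hi
    rw [hj, show i + j + 1 - i = j + 1 by omega, inv_pow]
    field_simp
    ring
  rw [e1, Polynomial.leadingCoeff]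
  linear_combination -e

theorem iptm_sum (c : ℕ → ℕ) (hcv : ∀ n, c n = 0 ∨ c n = 1)
    (hc0 : c 0 = 0) (hc1 : c 1 = 1) (hc2 : c 2 = 1) (hc3 : c 3 = 0)
    (h40 : ∀ n : ℕ, 1 ≤ n → c (4 * n) = c (4 * n - 1))
    (h41 : ∀ n : ℕ, 1 ≤ n → c (4 * n + 1) = c (4 * n - 1))
    (h42 : ∀ n : ℕ, 1 ≤ n → c (4 * n + 2) = c (4 * n - 1))
    (h43 : ∀ n : ℕ, 1 ≤ n → c (4 * n + 3) = (c (4 * n - 1) + c n) % 2) :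
    (∀ m : ℕ, c (16 * m + 15) = c (4 * m + 3)) ∧
    (∀ n : ℕ, c (4 * (n + 1) + 3) + c (4 * n + 3) = c (n + 1)) := by
  have c7 := h43 1 le_rfl
  have c11 := h43 2 (by norm_num)
  have c15 := h43 3 (by norm_num)
  norm_num [hc1, hc2, hc3] at c7
  norm_num [hc1, hc2, hc3, c7] at c11
  norm_num [hc1, hc2, hc3, c11] at c15
  have key : ∀ m : ℕ, c (16 * m + 15) = c (4 * m + 3) → c (16 * m + 19) = 0 ∧
      c (16 * m + 23) = c (4 * m + 3) ∧ c (16 * m + 27) = 0 ∧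
      c (16 * m + 31) = c (4 * m + 7) := by
    intro m hm
    have a0 := h40 (m + 1) (by omega)
    have a1 := h41 (m + 1) (by omega)
    have a2 := h42 (m + 1) (by omega)
    have b0 := h43 (4 * m + 4) (by omega)
    have b1 := h43 (4 * m + 5) (by omega)
    have b2 := h43 (4 * m + 6) (by omega)
    have b3 := h43 (4 * m + 7) (by omega)
    ring_nf at *
    simp only [show 4 + m * 4 - 1 = 3 + m * 4 by omega, show 16 + m * 16 - 1 = 15 + m * 16 by omega,
      show 20 + m * 16 - 1 = 19 + m * 16 by omega, show 24 + m * 16 - 1 = 23 + m * 16 by omega,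
      show 28 + m * 16 - 1 = 27 + m * 16 by omega] at *
    have := hcv (3 + m * 4)
    have := hcv (7 + m * 4)
    omega
  have hA : ∀ m : ℕ, c (16 * m + 15) = c (4 * m + 3) := by
    intro m
    induction m with
    | zero => simpa [hc3] using c15
    | succ m ih => exact (key m ih).2.2.2
  refine ⟨hA, ?_⟩
  intro n
  have hn := h43 (n + 1) (by omega)
  rw [show 4 * (n + 1) - 1 = 4 * n + 3 by omega] at hn
  have v1 := hcv (n + 1)
  have v2 := hcv (4 * n + 3)
  have main : c (n + 1) = 0 → c (4 * n + 3) = 0 := by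
    intro h0
    rcases Nat.lt_or_ge n 3 with h | h
    · interval_cases n <;> simp_all
    · obtain ⟨m, hm⟩ : ∃ m, n = 4 * m + 3 ∨ n = 4 * m + 4 ∨ n = 4 * m + 5 ∨ n = 4 * m + 6 :=
        ⟨(n - 3) / 4, by omega⟩
      have k := key m (hA m)
      have a0 := h40 (m + 1) (by omega)
      have a1 := h41 (m + 1) (by omega)
      have a2 := h42 (m + 1) (by omega)
      have hAm := hA m
      rw [show 4 * (m + 1) - 1 = 4 * m + 3 by omega] at a0 a1 a2
      rcases hm with rfl | rfl | rfl | rfl <;> ring_nf at * <;> omega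
  omega

theorem iptm_inf (c : ℕ → ℕ) (hc7 : c 7 = 1)
    (hA : ∀ m : ℕ, c (16 * m + 15) = c (4 * m + 3)) :
    ∀ K : ℕ, ∃ N : ℕ, K ≤ ∑ n ∈ Finset.range N, c n := by
  have hex : ∀ N : ℕ, ∃ m, N ≤ m ∧ c (4 * m + 3) = 1 := by
    intro N
    induction N with
    | zero => exact ⟨1, by omega, hc7⟩
    | succ N ih =>
      obtain ⟨m, h1, h2⟩ := ih
      refine ⟨4 * m + 3, by omega, ?_⟩
      rw [← h2, ← hA m]; congr 1; ring
  intro K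
  induction K with
  | zero => exact ⟨0, by simp⟩
  | succ K ih =>
    obtain ⟨N, hN⟩ := ih
    obtain ⟨m, h1, h2⟩ := hex N
    refine ⟨4 * m + 3 + 1, ?_⟩
    rw [Finset.sum_range_succ, h2]
    have : ∑ n ∈ Finset.range N, c n ≤ ∑ n ∈ Finset.range (4 * m + 3), c n :=
      Finset.sum_le_sum_of_subset (Finset.range_mono (by omega))
    omega

open Filter Topology in
theorem iptm_real (c : ℕ → ℕ) (hinf : ∀ K : ℕ, ∃ N : ℕ, K ≤ ∑ n ∈ Finset.range N, c n)
    (f : ℂ → ℂ) (hf : ∀ z : ℂ, ‖z‖ < 1 → HasSum (fun n => (c n : ℂ) * z ^ n) (f z)) :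
    Tendsto (fun r : ℝ => ‖f (r : ℂ)‖) (𝓝[<] 1) atTop := by
  rw [tendsto_atTop]
  intro M
  obtain ⟨K, hK⟩ := exists_nat_gt M
  obtain ⟨N, hN⟩ := hinf K
  have hcont : Continuous (fun r : ℝ => ∑ n ∈ Finset.range N, (c n : ℝ) * r ^ n) := by fun_prop
  have h1 : M < ∑ n ∈ Finset.range N, (c n : ℝ) * 1 ^ n := by
    simp only [one_pow, mul_one]
    have : (K : ℝ) ≤ ∑ n ∈ Finset.range N, (c n : ℝ) := by exact_mod_cast hN
    linarith
  have hev := ((hcont.tendsto 1).eventually (eventually_gt_nhds h1)).filter_mono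
    (nhdsWithin_le_nhds (s := Set.Iio 1))
  have h0 : ∀ᶠ r : ℝ in 𝓝[<] 1, 0 < r :=
    (eventually_gt_nhds (by norm_num : (0:ℝ) < 1)).filter_mono nhdsWithin_le_nhds
  filter_upwards [h0, self_mem_nhdsWithin, hev] with r hr hr1 hM
  have hr1 : r < 1 := hr1
  have hz : ‖(r : ℂ)‖ < 1 := by
    rw [Complex.norm_real, Real.norm_of_nonneg hr.le]
    exact hr1
  have hs := Complex.hasSum_re (hf _ hz)
  have hs' : HasSum (fun n => (c n : ℝ) * r ^ n) (f r).re := by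
    convert hs using 2 with n
    rw [← Complex.ofReal_natCast, ← Complex.ofReal_pow, ← Complex.ofReal_mul, Complex.ofReal_re]
  have := sum_le_hasSum (Finset.range N) (fun i _ => by positivity) hs'
  have := Complex.re_le_norm (f r)
  linarith

theorem iptm_feq (c : ℕ → ℕ) (hcv : ∀ n, c n = 0 ∨ c n = 1)
    (hc0 : c 0 = 0) (hc1 : c 1 = 1) (hc2 : c 2 = 1) (hc3 : c 3 = 0)
    (h40 : ∀ n : ℕ, 1 ≤ n → c (4 * n) = c (4 * n - 1))
    (h41 : ∀ n : ℕ, 1 ≤ n → c (4 * n + 1) = c (4 * n - 1))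
    (h42 : ∀ n : ℕ, 1 ≤ n → c (4 * n + 2) = c (4 * n - 1))
    (hB : ∀ n : ℕ, c (4 * (n + 1) + 3) + c (4 * n + 3) = c (n + 1))
    (f : ℂ → ℂ) (hf : ∀ z : ℂ, ‖z‖ < 1 → HasSum (fun n => (c n : ℂ) * z ^ n) (f z)) :
    ∃ D : ℂ → ℂ, (∀ z : ℂ, ‖z‖ < 1 → f z = (1 + z) * D z) ∧
      (∀ z : ℂ, ‖z‖ < 1 → D z = z + z ^ 3 * (1 + z ^ 2) * D (z ^ 4)) := by
  have hb : ∀ w : ℂ, ‖w‖ < 1 →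
      HasSum (fun n => (c (4 * n + 3) : ℂ) * w ^ n) (∑' n, (c (4 * n + 3) : ℂ) * w ^ n) := by
    intro w hw
    apply Summable.hasSum
    refine Summable.of_norm_bounded (summable_geometric_of_lt_one (norm_nonneg w) hw) ?_
    intro n
    rw [norm_mul, norm_pow]
    rcases hcv (4 * n + 3) with h | h <;> simp [h]
  refine ⟨fun w => ∑' n, (c (4 * n + 3) : ℂ) * w ^ n, ?_⟩
  set D : ℂ → ℂ := fun w => ∑' n, (c (4 * n + 3) : ℂ) * w ^ n with hDdef
  have h1 : ∀ z : ℂ, ‖z‖ < 1 → f z = (1 + z) * D z := by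
    intro z hz
    have s1 := (hasSum_nat_add_iff' 1).mpr (hf z hz)
    have s2 := (hasSum_nat_add_iff' 1).mpr (hb z hz)
    have s3 := (hb z hz).mul_left z
    have s4 := s2.add s3
    have e : (fun n => (c (n + 1) : ℂ) * z ^ (n + 1)) = fun n =>
        (c (4 * (n + 1) + 3) : ℂ) * z ^ (n + 1) + z * ((c (4 * n + 3) : ℂ) * z ^ n) := by
      funext n
      rw [← hB n]; push_cast; ring
    rw [e] at s1
    have := s1.unique s4
    simp [hc0, hc3] at this
    rw [this]; ring
  refine ⟨h1, ?_⟩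
  intro z hz
  have hz4 : ‖z ^ 4‖ < 1 := by
    rw [norm_pow]; exact pow_lt_one₀ (norm_nonneg _) hz (by norm_num)
  have s1 := (hasSum_nat_add_iff' 3).mpr (hf z hz)
  have sD := hb _ hz4
  have e0 : ∀ m, c (4 * m + 4) = c (4 * m + 3) := fun m => by
    have := h40 (m + 1) (by omega)
    rwa [show 4 * (m + 1) - 1 = 4 * m + 3 by omega] at this
  have e1 : ∀ m, c (4 * m + 5) = c (4 * m + 3) := fun m => by
    have := h41 (m + 1) (by omega)
    rwa [show 4 * (m + 1) - 1 = 4 * m + 3 by omega] at this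
  have e2 : ∀ m, c (4 * m + 6) = c (4 * m + 3) := fun m => by
    have := h42 (m + 1) (by omega)
    rwa [show 4 * (m + 1) - 1 = 4 * m + 3 by omega] at this
  have t0 : HasSum (fun m => (c (2 * (2 * m) + 3) : ℂ) * z ^ (2 * (2 * m) + 3)) (z ^ 3 * D (z ^ 4)) := by
    refine iptm_hs (sD.mul_left (z ^ 3)) fun m => ?_
    rw [show 2 * (2 * m) + 3 = 4 * m + 3 by ring]; ring
  have t1 : HasSum (fun m => (c (2 * (2 * m) + 1 + 3) : ℂ) * z ^ (2 * (2 * m) + 1 + 3))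
      (z ^ 4 * D (z ^ 4)) := by
    refine iptm_hs (sD.mul_left (z ^ 4)) fun m => ?_
    rw [show 2 * (2 * m) + 1 + 3 = 4 * m + 4 by ring, e0]; ring
  have t2 : HasSum (fun m => (c (2 * (2 * m + 1) + 3) : ℂ) * z ^ (2 * (2 * m + 1) + 3))
      (z ^ 5 * D (z ^ 4)) := by
    refine iptm_hs (sD.mul_left (z ^ 5)) fun m => ?_
    rw [show 2 * (2 * m + 1) + 3 = 4 * m + 5 by ring, e1]; ring
  have t3 : HasSum (fun m => (c (2 * (2 * m + 1) + 1 + 3) : ℂ) * z ^ (2 * (2 * m + 1) + 1 + 3))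
      (z ^ 6 * D (z ^ 4)) := by
    refine iptm_hs (sD.mul_left (z ^ 6)) fun m => ?_
    rw [show 2 * (2 * m + 1) + 1 + 3 = 4 * m + 6 by ring, e2]; ring
  have ev := HasSum.even_add_odd (f := fun m => (c (2 * m + 3) : ℂ) * z ^ (2 * m + 3)) t0 t2
  have od := HasSum.even_add_odd (f := fun m => (c (2 * m + 1 + 3) : ℂ) * z ^ (2 * m + 1 + 3)) t1 t3
  have al := HasSum.even_add_odd (f := fun m => (c (m + 3) : ℂ) * z ^ (m + 3)) ev od
  have := s1.unique al
  simp [Finset.sum_range_succ, hc0, hc1, hc2] at this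
  have hne : 1 + z ≠ 0 := by
    intro h0
    rw [show z = -1 by linear_combination h0] at hz
    norm_num at hz
  apply mul_left_cancel₀ hne
  rw [← h1 z hz]
  linear_combination this

open Filter Topology in
theorem iptm_fprim (f D : ℂ → ℂ) (h1 : ∀ z : ℂ, ‖z‖ < 1 → f z = (1 + z) * D z)
    (ζ : ℂ) (hζ : ‖ζ‖ = 1) (hne : 1 + ζ ≠ 0)
    (h : Tendsto (fun r : ℝ => ‖D ((r : ℂ) * ζ)‖) (𝓝[<] 1) atTop) :
    Tendsto (fun r : ℝ => ‖f ((r : ℂ) * ζ)‖) (𝓝[<] 1) atTop := by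
  have hc : Tendsto (fun r : ℝ => ‖1 + (r : ℂ) * ζ‖) (𝓝[<] 1) (𝓝 ‖1 + ζ‖) := by
    have hcont : Continuous (fun r : ℝ => ‖1 + (r : ℂ) * ζ‖) := by fun_prop
    have := hcont.tendsto 1
    simp only [Complex.ofReal_one, one_mul] at this
    exact this.mono_left nhdsWithin_le_nhds
  refine (hc.pos_mul_atTop (norm_pos_iff.mpr hne) h).congr' ?_
  have h0 : ∀ᶠ r : ℝ in 𝓝[<] 1, 0 < r :=
    (eventually_gt_nhds (by norm_num : (0:ℝ) < 1)).filter_mono nhdsWithin_le_nhds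
  filter_upwards [h0, self_mem_nhdsWithin] with r hr hr1
  have hr1 : r < 1 := hr1
  have hz : ‖(r : ℂ) * ζ‖ < 1 := by
    rw [norm_mul, hζ, mul_one, Complex.norm_real, Real.norm_of_nonneg hr.le]
    exact hr1
  rw [h1 _ hz, norm_mul]

/-- The holomorphic function `C(z) = ∑ cₙ zⁿ` on the open unit disk is
transcendental over `ℂ(X)`: no nonzero polynomial `P ∈ ℂ[X][Y]` satisfies
`P(z, C(z)) = 0` on the disk. In particular `C` is not a rational function. -/
theorem iptm_series_transcendental (c : ℕ → ℕ) (hcv : ∀ n, c n = 0 ∨ c n = 1)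
    (hc0 : c 0 = 0) (hc1 : c 1 = 1) (hc2 : c 2 = 1) (hc3 : c 3 = 0)
    (h40 : ∀ n : ℕ, 1 ≤ n → c (4 * n) = c (4 * n - 1))
    (h41 : ∀ n : ℕ, 1 ≤ n → c (4 * n + 1) = c (4 * n - 1))
    (h42 : ∀ n : ℕ, 1 ≤ n → c (4 * n + 2) = c (4 * n - 1))
    (h43 : ∀ n : ℕ, 1 ≤ n → c (4 * n + 3) = (c (4 * n - 1) + c n) % 2)
    (f : ℂ → ℂ) (hf : ∀ z : ℂ, ‖z‖ < 1 → HasSum (fun n => (c n : ℂ) * z ^ n) (f z)) :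
    (∀ P : Polynomial (Polynomial ℂ),
      (∀ z : ℂ, ‖z‖ < 1 →
        Polynomial.eval (f z) (P.map (Polynomial.evalRingHom z)) = 0) → P = 0) ∧
    ¬ ∃ p q : Polynomial ℂ, q ≠ 0 ∧
        ∀ z : ℂ, ‖z‖ < 1 → f z * Polynomial.eval z q = Polynomial.eval z p := by
  obtain ⟨hA, hB⟩ := iptm_sum c hcv hc0 hc1 hc2 hc3 h40 h41 h42 h43
  obtain ⟨D, hfD, hD⟩ := iptm_feq c hcv hc0 hc1 hc2 hc3 h40 h41 h42 hB f hf
  have hc7 : c 7 = 1 := by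
    have := h43 1 le_rfl
    norm_num [hc1, hc3] at this
    exact this
  have hreal := iptm_real c (iptm_inf c hc7 hA) f hf
  have hDreal : Filter.Tendsto (fun r : ℝ => ‖D (r : ℂ)‖) (nhdsWithin 1 (Set.Iio 1))
      Filter.atTop := by
    have h2 := hreal.const_mul_atTop (by norm_num : (0 : ℝ) < 1 / 2)
    refine Filter.tendsto_atTop_mono' _ ?_ h2
    have h0 : ∀ᶠ r : ℝ in nhdsWithin 1 (Set.Iio 1), 0 < r :=
      (eventually_gt_nhds (by norm_num : (0:ℝ) < 1)).filter_mono nhdsWithin_le_nhds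
    filter_upwards [h0, self_mem_nhdsWithin] with r hr hr1
    have hr1 : r < 1 := hr1
    have hz : ‖(r : ℂ)‖ < 1 := by
      rw [Complex.norm_real, Real.norm_of_nonneg hr.le]
      exact hr1
    rw [hfD _ hz, norm_mul]
    have h3 : ‖1 + (r : ℂ)‖ ≤ 2 := by
      have := norm_add_le (1 : ℂ) r
      rw [norm_one] at this
      linarith
    nlinarith [norm_nonneg (D r)]
  have hmain : ∀ P : Polynomial (Polynomial ℂ),
      (∀ z : ℂ, ‖z‖ < 1 →
        Polynomial.eval (f z) (P.map (Polynomial.evalRingHom z)) = 0) → P = 0 := by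
    intro P hP
    rw [← Polynomial.leadingCoeff_eq_zero]
    let ζ : ℕ → ℂ := fun k => Complex.exp (2 * Real.pi * Complex.I / ((2 * 4 ^ (k + 1) : ℕ) : ℂ))
    have hprim : ∀ k, IsPrimitiveRoot (ζ k) (2 * 4 ^ (k + 1)) := fun k =>
      Complex.isPrimitiveRoot_exp _ (by positivity)
    have hinj : Function.Injective ζ := by
      intro a b hab
      have ha := hprim a
      rw [hab] at ha
      have h := ha.unique (hprim b)
      have h' : 4 ^ (a + 1) = 4 ^ (b + 1) := by omega
      have := Nat.pow_right_injective (le_refl 2 |>.trans (by norm_num : 2 ≤ 4)) h'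
      omega
    refine Polynomial.eq_zero_of_infinite_isRoot _ ((Set.infinite_range_of_injective hinj).mono ?_)
    rintro _ ⟨k, rfl⟩
    have hn : ‖ζ k‖ = 1 := (hprim k).norm'_eq_one (by positivity)
    refine iptm_lead f P hP (ζ k) hn (iptm_fprim f D hfD _ hn ?_ (iptm_prim D hD hDreal _ _ (hprim k)))
    intro h0
    have h2 : ζ k ^ 2 = 1 := by
      rw [show ζ k = -1 by linear_combination h0]; norm_num
    have hle := Nat.le_of_dvd (by norm_num) ((hprim k).dvd_of_pow_eq_one 2 h2)
    have h1 : 1 ≤ 4 ^ k := Nat.one_le_pow _ _ (by norm_num)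
    rw [pow_succ] at hle
    omega
  refine ⟨hmain, ?_⟩
  rintro ⟨p, q, hq, h⟩
  apply hq
  have h0 := hmain (Polynomial.X * Polynomial.C q - Polynomial.C p) (by
    intro z hz
    simp
    linear_combination h z hz)
  have h1 := congrArg (fun Q => Polynomial.coeff Q 1) h0
  simpa [Polynomial.coeff_C] using h1
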